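/- Let {e₁,e₂,e₃} be the standard orthonormal basis of V = ℝ³ and suppose (K,S) is in S₃-canonical form with parameters (λ,a,b) with λ > 0. Then the stabilizer of (K,S) in SO(3) is exactly the order-6 subgroup generated by P₁ and R₃, namely {id, R₃, R₃², P₁, P₁R₃, R₃P₁}, and this group is isomorphic to the symmetric group S₃. -/

import Mathlib

/-!
In coordinates, `K(X, Y) = λ (x₁y₁ - x₂y₂, -(x₁y₂ + x₂y₁), 0)`, so the plane `e₃⊥` and the line
`ℝ e₃` are attached to `K`, and an element `g` of the stabilizer preserves both. In the plane,
`v = ge₁` is a unit vector with `K(v, v) = λ v`, hence one of the three vertices `e₁`, `R₃e₁`,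
`R₃²e₁` of an equilateral triangle; then `K(ge₁, ge₂) = -λ ge₂` determines `ge₂` up to sign, and
`det g = 1` determines `ge₃`. This leaves the six listed matrices (`matrixOf_mem_of_mem_stab`).

Conversely the stabilizer is a group, so it suffices to check that it contains `P₁` and `R₃`
(`mem_stab_of_P1`, `mem_stab_of_R3`), the other listed matrices being words in these
(`mem_of_matrixOf_mem`). The stabilizer permutes the vertices of the triangle, `P₁` as a
transposition and `R₃` as a 3-cycle; this action is faithful and onto, which gives the isomorphism
with `S₃` (`nonempty_mulEquiv_perm`) and the order 6.
-/

/-!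
Setting (affine hypersurfaces admitting a pointwise symmetry, algebraic part):
`V₃ = ℝ³` with its standard inner product `h = ⟪·,·⟫`.  `K` is a symmetric bilinear
map `V₃ × V₃ → V₃` whose cubic form `h(K(X,Y),Z)` is totally symmetric and which
satisfies the apolarity condition (`K_X` trace-free), `S` is an `h`-symmetric
endomorphism.  `stab K S` is the stabilizer of the pair `(K,S)` inside `SO(3)`.
-/

noncomputable section

open scoped RealInnerProductSpace

/-- The 3-dimensional Euclidean space `ℝ³` with its standard inner product. -/
abbrev V₃ := EuclideanSpace ℝ (Fin 3)

/-- A symmetric bilinear map `K` is admissible (a difference tensor) if the cubic form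
`(X,Y,Z) ↦ ⟪K X Y, Z⟫` is totally symmetric and `K_X := K X ·` is trace-free for all `X`. -/
def IsAdmissibleK (K : V₃ →ₗ[ℝ] V₃ →ₗ[ℝ] V₃) : Prop :=
  (∀ X Y, K X Y = K Y X) ∧
  (∀ X Y Z, ⟪K X Y, Z⟫ = ⟪K X Z, Y⟫) ∧
  (∀ X, LinearMap.trace ℝ V₃ (K X) = 0)

/-- `S` is a symmetric endomorphism with respect to the inner product. -/
def IsSymmEndo (S : V₃ →ₗ[ℝ] V₃) : Prop := ∀ X Y, ⟪S X, Y⟫ = ⟪X, S Y⟫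

/-- The stabilizer of the pair `(K,S)` inside `SO(3)`: all orientation-preserving
(i.e. determinant `1`) linear isometries `g` of `ℝ³` with `K(gX,gY) = g(K(X,Y))`
and `S(gX) = g(SX)` for all `X, Y`. -/
def stab (K : V₃ →ₗ[ℝ] V₃ →ₗ[ℝ] V₃) (S : V₃ →ₗ[ℝ] V₃) : Set (V₃ ≃ₗᵢ[ℝ] V₃) :=
  {g | LinearMap.det (g.toLinearEquiv : V₃ →ₗ[ℝ] V₃) = 1 ∧
    (∀ X Y, K (g X) (g Y) = g (K X Y)) ∧ (∀ X, S (g X) = g (S X))}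

/-- The matrix of `g` with respect to the orthonormal basis `e`: column `j` consists of
the coordinates of `g (e j)` in the basis `e`. -/
def matrixOf (e : OrthonormalBasis (Fin 3) ℝ V₃) (g : V₃ ≃ₗᵢ[ℝ] V₃) :
    Matrix (Fin 3) (Fin 3) ℝ :=
  Matrix.of fun i j => ⟪e i, g (e j)⟫

/-- The standard orthonormal basis `{e₁, e₂, e₃}` of `ℝ³`. -/
def stdB : OrthonormalBasis (Fin 3) ℝ V₃ := EuclideanSpace.basisFun (Fin 3) ℝ

/-- Matrix of the rotation by angle `θ` about the first basis vector `e₁`. -/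
def rotMat (θ : ℝ) : Matrix (Fin 3) (Fin 3) ℝ :=
  !![1, 0, 0; 0, Real.cos θ, -Real.sin θ; 0, Real.sin θ, Real.cos θ]

/-- Matrix of the rotation by angle `π` about the axis `cos (θ/2) e₂ + sin (θ/2) e₃`
in the plane orthogonal to `e₁`. -/
def flipMat (θ : ℝ) : Matrix (Fin 3) (Fin 3) ℝ :=
  !![-1, 0, 0; 0, Real.cos θ, Real.sin θ; 0, Real.sin θ, -Real.cos θ]

/-- The set of all rotations about the axis `e 0` (the first vector of the basis `e`). -/
def rotSet (e : OrthonormalBasis (Fin 3) ℝ V₃) : Set (V₃ ≃ₗᵢ[ℝ] V₃) :=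
  {g | ∃ θ : ℝ, matrixOf e g = rotMat θ}

/-- The set of all rotations by angle `π` about axes orthogonal to `e 0`. -/
def flipSet (e : OrthonormalBasis (Fin 3) ℝ V₃) : Set (V₃ ≃ₗᵢ[ℝ] V₃) :=
  {g | ∃ θ : ℝ, matrixOf e g = flipMat θ}

/-- The whole of `SO(3)`, as a set of linear isometries of `ℝ³`. -/
def so3Set : Set (V₃ ≃ₗᵢ[ℝ] V₃) :=
  {g | LinearMap.det (g.toLinearEquiv : V₃ →ₗ[ℝ] V₃) = 1}

/-- Matrix of `P₁`, the rotation by angle `π` about `e₁`. -/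
def P1mat : Matrix (Fin 3) (Fin 3) ℝ := !![1, 0, 0; 0, -1, 0; 0, 0, -1]

/-- Matrix of `P₂`, the rotation by angle `π` about `e₂`. -/
def P2mat : Matrix (Fin 3) (Fin 3) ℝ := !![-1, 0, 0; 0, 1, 0; 0, 0, -1]

/-- Matrix of `P₃`, the rotation by angle `π` about `e₃`. -/
def P3mat : Matrix (Fin 3) (Fin 3) ℝ := !![-1, 0, 0; 0, -1, 0; 0, 0, 1]

/-- Matrix of `R₁`, the rotation by angle `2π/3` about `e₁`. -/
def R1mat : Matrix (Fin 3) (Fin 3) ℝ :=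
  !![1, 0, 0; 0, -(1/2), -(Real.sqrt 3/2); 0, Real.sqrt 3/2, -(1/2)]

/-- Matrix of `R₃`, the rotation by angle `2π/3` about `e₃`. -/
def R3mat : Matrix (Fin 3) (Fin 3) ℝ :=
  !![-(1/2), -(Real.sqrt 3/2), 0; Real.sqrt 3/2, -(1/2), 0; 0, 0, 1]

/-- Matrix of `Q`, the rotation by angle `2π/3` about the axis `e₁ + e₂ + e₃`
(the cyclic permutation `e₁ ↦ e₂ ↦ e₃ ↦ e₁`). -/
def Qmat : Matrix (Fin 3) (Fin 3) ℝ := !![0, 0, 1; 1, 0, 0; 0, 1, 0]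

/-- The matrices of the Klein four-group `{id, P₁, P₂, P₃} ≅ Z₂ × Z₂`. -/
def kleinMatSet : Set (Matrix (Fin 3) (Fin 3) ℝ) := {1, P1mat, P2mat, P3mat}

/-- The matrices of the order-6 group `⟨P₁, R₃⟩ ≅ S₃`. -/
def s3MatSet : Set (Matrix (Fin 3) (Fin 3) ℝ) :=
  {1, R3mat, R3mat * R3mat, P1mat, P1mat * R3mat, R3mat * P1mat}

/-- The matrices of the order-12 group `⟨P₁, P₂, Q⟩ ≅ A₄`. -/
def a4MatSet : Set (Matrix (Fin 3) (Fin 3) ℝ) :=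
  {1, P1mat, P2mat, P3mat, Qmat, Qmat * Qmat,
   P1mat * Qmat, P2mat * Qmat, P3mat * Qmat,
   Qmat * Qmat * P1mat, Qmat * Qmat * P2mat, Qmat * Qmat * P3mat}

/-- The matrices of the order-3 group `{id, R₁, R₁²} ≅ Z₃`. -/
def z3MatSet : Set (Matrix (Fin 3) (Fin 3) ℝ) := {1, R1mat, R1mat * R1mat}

/-- The matrices of the order-2 group `{id, P₁} ≅ Z₂`. -/
def z2MatSet : Set (Matrix (Fin 3) (Fin 3) ℝ) := {1, P1mat}

/-- The pair `(K,S)` is in `Z₂`-canonical form with parameters `(lam, mu, a, b, c, d)`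
with respect to the orthonormal basis `e`. -/
def Z2Form (K : V₃ →ₗ[ℝ] V₃ →ₗ[ℝ] V₃) (S : V₃ →ₗ[ℝ] V₃)
    (e : OrthonormalBasis (Fin 3) ℝ V₃) (lam mu a b c d : ℝ) : Prop :=
  K (e 0) (e 0) = (2*lam) • e 0 ∧
  K (e 0) (e 1) = (-lam) • e 1 + mu • e 2 ∧
  K (e 0) (e 2) = mu • e 1 + (-lam) • e 2 ∧
  K (e 1) (e 1) = (-lam) • e 0 ∧
  K (e 1) (e 2) = mu • e 0 ∧
  K (e 2) (e 2) = (-lam) • e 0 ∧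
  S (e 0) = a • e 0 ∧ S (e 1) = b • e 1 + d • e 2 ∧ S (e 2) = d • e 1 + c • e 2

/-- The pair `(K,S)` is in `Z₃`-canonical form with parameters `(lam, mu, a, b)`
with respect to the orthonormal basis `e`. -/
def Z3Form (K : V₃ →ₗ[ℝ] V₃ →ₗ[ℝ] V₃) (S : V₃ →ₗ[ℝ] V₃)
    (e : OrthonormalBasis (Fin 3) ℝ V₃) (lam mu a b : ℝ) : Prop :=
  K (e 0) (e 0) = (2*lam) • e 0 ∧
  K (e 0) (e 1) = (-lam) • e 1 ∧
  K (e 0) (e 2) = (-lam) • e 2 ∧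
  K (e 1) (e 1) = (-lam) • e 0 + mu • e 1 ∧
  K (e 1) (e 2) = (-mu) • e 2 ∧
  K (e 2) (e 2) = (-lam) • e 0 + (-mu) • e 1 ∧
  S (e 0) = a • e 0 ∧ S (e 1) = b • e 1 ∧ S (e 2) = b • e 2

/-- The pair `(K,S)` is in `SO(2)`-canonical form with parameters `(lam, a, b)`
with respect to the orthonormal basis `e`. -/
def SO2Form (K : V₃ →ₗ[ℝ] V₃ →ₗ[ℝ] V₃) (S : V₃ →ₗ[ℝ] V₃)
    (e : OrthonormalBasis (Fin 3) ℝ V₃) (lam a b : ℝ) : Prop :=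
  K (e 0) (e 0) = (2*lam) • e 0 ∧
  K (e 0) (e 1) = (-lam) • e 1 ∧
  K (e 0) (e 2) = (-lam) • e 2 ∧
  K (e 1) (e 1) = (-lam) • e 0 ∧
  K (e 1) (e 2) = 0 ∧
  K (e 2) (e 2) = (-lam) • e 0 ∧
  S (e 0) = a • e 0 ∧ S (e 1) = b • e 1 ∧ S (e 2) = b • e 2

/-- The pair `(K,S)` is in orthogonal-triple canonical form with parameters `(lam, a, b, c)`
with respect to the orthonormal basis `e`. -/
def OTForm (K : V₃ →ₗ[ℝ] V₃ →ₗ[ℝ] V₃) (S : V₃ →ₗ[ℝ] V₃)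
    (e : OrthonormalBasis (Fin 3) ℝ V₃) (lam a b c : ℝ) : Prop :=
  K (e 0) (e 0) = 0 ∧ K (e 1) (e 1) = 0 ∧ K (e 2) (e 2) = 0 ∧
  K (e 0) (e 1) = lam • e 2 ∧
  K (e 0) (e 2) = lam • e 1 ∧
  K (e 1) (e 2) = lam • e 0 ∧
  S (e 0) = a • e 0 ∧ S (e 1) = b • e 1 ∧ S (e 2) = c • e 2

/-- The pair `(K,S)` is in `S₃`-canonical form with parameters `(lam, a, b)`
with respect to the orthonormal basis `e`. -/
def S3Form (K : V₃ →ₗ[ℝ] V₃ →ₗ[ℝ] V₃) (S : V₃ →ₗ[ℝ] V₃)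
    (e : OrthonormalBasis (Fin 3) ℝ V₃) (lam a b : ℝ) : Prop :=
  K (e 0) (e 0) = lam • e 0 ∧
  K (e 0) (e 1) = (-lam) • e 1 ∧
  K (e 1) (e 1) = (-lam) • e 0 ∧
  K (e 0) (e 2) = 0 ∧ K (e 1) (e 2) = 0 ∧ K (e 2) (e 2) = 0 ∧
  S (e 0) = a • e 0 ∧ S (e 1) = a • e 1 ∧ S (e 2) = b • e 2

/-! ### Isometries of `ℝ³` and their matrices -/

lemma matrixOf_apply (g : V₃ ≃ₗᵢ[ℝ] V₃) (i j : Fin 3) :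
    matrixOf stdB g i j = g (stdB j) i := by
  simp [matrixOf, stdB, EuclideanSpace.inner_single_left]

lemma eq_sum_stdB (X : V₃) : X = X 0 • stdB 0 + X 1 • stdB 1 + X 2 • stdB 2 := by
  ext i
  fin_cases i <;> simp [stdB]

lemma apply_coord (g : V₃ ≃ₗᵢ[ℝ] V₃) (X : V₃) (i : Fin 3) :
    g X i = matrixOf stdB g i 0 * X 0 + matrixOf stdB g i 1 * X 1
      + matrixOf stdB g i 2 * X 2 := by
  conv_lhs => rw [eq_sum_stdB X]
  simp only [map_add, map_smul, PiLp.add_apply, PiLp.smul_apply, smul_eq_mul, matrixOf_apply]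
  ring

lemma matrixOf_injective : Function.Injective (matrixOf stdB) := by
  intro g h hgh
  ext X i
  rw [apply_coord, apply_coord, hgh]

lemma matrixOf_one : matrixOf stdB 1 = 1 := by
  ext i j
  rw [matrixOf_apply]
  fin_cases i <;> fin_cases j <;> simp [stdB]

lemma matrixOf_mul (g h : V₃ ≃ₗᵢ[ℝ] V₃) :
    matrixOf stdB (g * h) = matrixOf stdB g * matrixOf stdB h := by
  ext i j
  rw [matrixOf_apply, LinearIsometryEquiv.coe_mul, Function.comp_apply, apply_coord,
    Matrix.mul_apply, Fin.sum_univ_three]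
  simp only [matrixOf_apply]

lemma det_matrixOf (g : V₃ ≃ₗᵢ[ℝ] V₃) :
    LinearMap.det (g.toLinearEquiv : V₃ →ₗ[ℝ] V₃) = (matrixOf stdB g).det := by
  rw [← LinearMap.det_toMatrix stdB.toBasis]
  congr 1
  ext i j
  rw [LinearMap.toMatrix_apply, matrixOf_apply]
  simp [stdB]

/-- The columns of the matrix of an isometry are orthonormal. -/
lemma matrixOf_orthonormal (g : V₃ ≃ₗᵢ[ℝ] V₃) (j k : Fin 3) :
    matrixOf stdB g 0 j * matrixOf stdB g 0 k + matrixOf stdB g 1 j * matrixOf stdB g 1 k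
      + matrixOf stdB g 2 j * matrixOf stdB g 2 k = if j = k then 1 else 0 := by
  have h := (orthonormal_iff_ite.mp stdB.orthonormal) j k
  rw [← g.inner_map_map] at h
  rw [← h]
  simp only [matrixOf_apply, PiLp.inner_apply, Fin.sum_univ_three, RCLike.inner_apply, conj_trivial]
  ring

lemma exists_isometry (M : Matrix (Fin 3) (Fin 3) ℝ) (hM : M.transpose * M = 1) :
    ∃ g : V₃ ≃ₗᵢ[ℝ] V₃, matrixOf stdB g = M := by
  have hM' : M * M.transpose = 1 := mul_eq_one_comm.mp hM
  let f : V₃ ≃ₗ[ℝ] V₃ := LinearEquiv.ofLinearMap (Matrix.toEuclideanLin M)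
    (Matrix.toEuclideanLin M.transpose)
    (by ext x i; simp [Matrix.toLpLin_apply, hM'])
    (by ext x i; simp [Matrix.toLpLin_apply, hM])
  refine ⟨f.isometryOfInner fun x y => ?_, ?_⟩
  · change ⟪Matrix.toEuclideanLin M x, Matrix.toEuclideanLin M y⟫ = _
    rw [← LinearMap.adjoint_inner_right, ← Matrix.toEuclideanLin_conjTranspose_eq_adjoint,
      Matrix.conjTranspose_eq_transpose_of_trivial]
    simp [Matrix.toLpLin_apply, hM]
  · ext i j
    rw [matrixOf_apply]
    change Matrix.toEuclideanLin M (stdB j) i = _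
    simp [stdB, Matrix.toLpLin_apply]

lemma sqrt_three_mul_self : Real.sqrt 3 * Real.sqrt 3 = 3 :=
  Real.mul_self_sqrt (by norm_num)

lemma exists_P1 : ∃ g : V₃ ≃ₗᵢ[ℝ] V₃, matrixOf stdB g = P1mat := by
  apply exists_isometry
  ext i j
  fin_cases i <;> fin_cases j <;> simp [P1mat, Matrix.mul_apply, Fin.sum_univ_three]

lemma exists_R3 : ∃ g : V₃ ≃ₗᵢ[ℝ] V₃, matrixOf stdB g = R3mat := by
  apply exists_isometry
  have h := sqrt_three_mul_self
  ext i j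
  fin_cases i <;> fin_cases j <;> simp [R3mat, Matrix.mul_apply, Fin.sum_univ_three] <;>
    linarith

/-! ### The stabilizer -/

/-- The stabilizer of `(K, S)` in `SO(3)`, as a subgroup of the isometry group. -/
def stabSubgroup (K : V₃ →ₗ[ℝ] V₃ →ₗ[ℝ] V₃) (S : V₃ →ₗ[ℝ] V₃) :
    Subgroup (V₃ ≃ₗᵢ[ℝ] V₃) where
  carrier := stab K S
  one_mem' := ⟨LinearMap.det_id, fun _ _ => rfl, fun _ => rfl⟩
  mul_mem' := by
    rintro g h ⟨hg, hgK, hgS⟩ ⟨hh, hhK, hhS⟩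
    refine ⟨?_, fun X Y => ?_, fun X => ?_⟩
    · rw [det_matrixOf] at *
      rw [matrixOf_mul, Matrix.det_mul, hg, hh, one_mul]
    · simp only [LinearIsometryEquiv.coe_mul, Function.comp_apply, hgK, hhK]
    · simp only [LinearIsometryEquiv.coe_mul, Function.comp_apply, hgS, hhS]
  inv_mem' := by
    rintro g ⟨hg, hgK, hgS⟩
    have hinv : ∀ X, g (g⁻¹ X) = X := fun X => g.apply_symm_apply X
    refine ⟨?_, fun X Y => ?_, fun X => ?_⟩
    · have h : (matrixOf stdB (g⁻¹ * g)).det = 1 := by simp [matrixOf_one]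
      rw [det_matrixOf] at *
      rwa [matrixOf_mul, Matrix.det_mul, hg, mul_one] at h
    · apply g.injective
      rw [← hgK, hinv, hinv, hinv]
    · apply g.injective
      rw [← hgS, hinv, hinv]

section

variable {K : V₃ →ₗ[ℝ] V₃ →ₗ[ℝ] V₃} {S : V₃ →ₗ[ℝ] V₃} {lam a b : ℝ}

lemma S3Form.K_apply (hK : IsAdmissibleK K) (hform : S3Form K S stdB lam a b) (X Y : V₃) :
    K X Y = !₂[lam * (X 0 * Y 0 - X 1 * Y 1), -lam * (X 0 * Y 1 + X 1 * Y 0), 0] := by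
  obtain ⟨h00, h01, h11, h02, h12, h22, -⟩ := hform
  have h10 := (hK.1 (stdB 1) (stdB 0)).trans h01
  have h20 := (hK.1 (stdB 2) (stdB 0)).trans h02
  have h21 := (hK.1 (stdB 2) (stdB 1)).trans h12
  conv_lhs => rw [eq_sum_stdB X, eq_sum_stdB Y]
  simp only [map_add, map_smul, LinearMap.add_apply, LinearMap.smul_apply, h00, h01, h11, h02,
    h12, h22, h10, h20, h21]
  ext i
  fin_cases i <;> simp [stdB] <;> ring

lemma S3Form.S_apply (hform : S3Form K S stdB lam a b) (X : V₃) :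
    S X = !₂[a * X 0, a * X 1, b * X 2] := by
  obtain ⟨-, -, -, -, -, -, h0, h1, h2⟩ := hform
  conv_lhs => rw [eq_sum_stdB X]
  simp only [map_add, map_smul, h0, h1, h2]
  ext i
  fin_cases i <;> simp [stdB] <;> ring

lemma mem_stab_of_P1 (hK : IsAdmissibleK K) (hform : S3Form K S stdB lam a b)
    {g : V₃ ≃ₗᵢ[ℝ] V₃} (hg : matrixOf stdB g = P1mat) : g ∈ stab K S := by
  refine ⟨?_, fun X Y => ?_, fun X => ?_⟩
  · rw [det_matrixOf, hg]
    simp [P1mat, Matrix.det_fin_three]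
  · rw [hform.K_apply hK, hform.K_apply hK]
    ext i
    fin_cases i <;> simp [apply_coord, hg, P1mat] <;> ring
  · rw [hform.S_apply, hform.S_apply]
    ext i
    fin_cases i <;> simp [apply_coord, hg, P1mat]

lemma mem_stab_of_R3 (hK : IsAdmissibleK K) (hform : S3Form K S stdB lam a b)
    {g : V₃ ≃ₗᵢ[ℝ] V₃} (hg : matrixOf stdB g = R3mat) : g ∈ stab K S := by
  have h3 := sqrt_three_mul_self
  refine ⟨?_, fun X Y => ?_, fun X => ?_⟩
  · rw [det_matrixOf, hg]
    simp [R3mat, Matrix.det_fin_three]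
    linarith
  · rw [hform.K_apply hK, hform.K_apply hK]
    ext i
    fin_cases i
    · simp [apply_coord, hg, R3mat]
      linear_combination (lam * (X 1 * Y 1 - X 0 * Y 0) / 4) * h3
    · simp [apply_coord, hg, R3mat]
      linear_combination (lam * (X 0 * Y 1 + X 1 * Y 0) / 4) * h3
    · simp [apply_coord, hg, R3mat]
  · rw [hform.S_apply, hform.S_apply]
    ext i
    fin_cases i <;> simp [apply_coord, hg, R3mat] <;> ring

/-- The relations `K(ge₁, ge₁) = λ ge₁`, `K(ge₁, ge₂) = -λ ge₂` and
`K(ge₃, ge₃) = 0` force `g` to preserve the plane `e₃⊥` and the line `ℝ e₃`. In that plane the first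
one leaves three choices for `ge₁`, the second one then two for `ge₂`, and the determinant decides
`ge₃`. -/
lemma matrixOf_mem_of_mem_stab (hK : IsAdmissibleK K) (hlam : 0 < lam)
    (hform : S3Form K S stdB lam a b) {g : V₃ ≃ₗᵢ[ℝ] V₃} (hg : g ∈ stab K S) :
    matrixOf stdB g ∈ s3MatSet := by
  obtain ⟨hdet, hgK, -⟩ := hg
  rw [det_matrixOf] at hdet
  have o00 := matrixOf_orthonormal g 0 0
  have o11 := matrixOf_orthonormal g 1 1
  have k00 := hgK (stdB 0) (stdB 0)
  have k01 := hgK (stdB 0) (stdB 1)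
  have k22 := hgK (stdB 2) (stdB 2)
  rw [hform.1, hform.K_apply hK, map_smul] at k00
  rw [hform.2.1, hform.K_apply hK, map_smul] at k01
  rw [hform.2.2.2.2.2.1, hform.K_apply hK, LinearIsometryEquiv.map_zero] at k22
  have q0 := congrArg (fun v : V₃ => v 0) k00
  have q1 := congrArg (fun v : V₃ => v 1) k00
  have q2 := congrArg (fun v : V₃ => v 2) k00
  have r0 := congrArg (fun v : V₃ => v 0) k01
  have r1 := congrArg (fun v : V₃ => v 1) k01
  have r2 := congrArg (fun v : V₃ => v 2) k01
  have s0 := congrArg (fun v : V₃ => v 0) k22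
  have s1 := congrArg (fun v : V₃ => v 1) k22
  simp only [PiLp.smul_apply, smul_eq_mul, ← matrixOf_apply] at q0 q1 q2 r0 r1 r2 s0 s1
  simp [hlam.ne'] at q0 q1 q2 r0 r1 r2 s0 s1
  rw [Matrix.det_fin_three] at hdet
  generalize matrixOf stdB g = M at *
  have hM : M = !![M 0 0, M 0 1, M 0 2; M 1 0, M 1 1, M 1 2; M 2 0, M 2 1, M 2 2] := by
    ext i j
    fin_cases i <;> fin_cases j <;> rfl
  generalize M 0 0 = p at *
  generalize M 1 0 = q at *
  generalize M 0 1 = r at *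
  generalize M 1 1 = t at *
  generalize M 0 2 = u at *
  generalize M 1 2 = w at *
  generalize M 2 2 = s at *
  rw [q2, r2] at *
  have hu : u = 0 := by
    have : u ^ 2 * u ^ 2 = 0 := by linear_combination u ^ 2 * s0 + u * w / 2 * s1
    simpa using this
  have hw : w = 0 := by
    subst hu
    simpa using s0
  subst hu hw
  replace q1 : q * (2 * p + 1) = 0 :=
    (mul_eq_zero.mp (by linear_combination -q1 : lam * (q * (2 * p + 1)) = 0)).resolve_left hlam.ne'
  replace r0 : p * r - q * t + r = 0 :=
    (mul_eq_zero.mp (by linear_combination r0 : lam * (p * r - q * t + r) = 0)).resolve_left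
      hlam.ne'
  have h3 := sqrt_three_mul_self
  simp at o00 o11
  simp only [s3MatSet, Set.mem_insert_iff, Set.mem_singleton_iff, hM]
  rcases mul_eq_zero.mp q1 with rfl | hp
  · have hp : p = 1 := by linear_combination o00 - q0
    subst hp
    have hr : r = 0 := by linear_combination r0 / 2
    subst hr
    have ht : (t - 1) * (t + 1) = 0 := by linear_combination o11
    rcases mul_eq_zero.mp ht with ht | ht
    · obtain rfl : t = 1 := by linarith
      obtain rfl : s = 1 := by linarith
      left
      ext i j
      fin_cases i <;> fin_cases j <;> simp
    · obtain rfl : t = -1 := by linarith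
      obtain rfl : s = -1 := by linarith
      right; right; right; left
      rfl
  · obtain rfl : p = -(1/2) := by linarith
    have hr : r = 2 * q * t := by linear_combination 2 * r0
    subst hr
    have hq : (q - Real.sqrt 3 / 2) * (q + Real.sqrt 3 / 2) = 0 := by
      linear_combination o00 - h3 / 4
    have ht : (t - 1 / 2) * (t + 1 / 2) = 0 := by
      linear_combination o11 / 4 - t ^ 2 * o00
    rcases mul_eq_zero.mp hq with hq | hq <;> rcases mul_eq_zero.mp ht with ht | ht
    · obtain rfl : q = Real.sqrt 3 / 2 := by linarith
      obtain rfl : t = 1 / 2 := by linarith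
      obtain rfl : s = -1 := by linear_combination -hdet - s / 4 * h3
      right; right; right; right; right
      ext i j
      fin_cases i <;> fin_cases j <;> simp [R3mat, P1mat, Matrix.mul_apply, Fin.sum_univ_three] <;>
        ring
    · obtain rfl : q = Real.sqrt 3 / 2 := by linarith
      obtain rfl : t = -(1 / 2) := by linarith
      obtain rfl : s = 1 := by linear_combination hdet - s / 4 * h3
      right; left
      ext i j
      fin_cases i <;> fin_cases j <;> simp [R3mat] <;> ring
    · obtain rfl : q = -(Real.sqrt 3 / 2) := by linarith
      obtain rfl : t = 1 / 2 := by linarith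
      obtain rfl : s = -1 := by linear_combination -hdet - s / 4 * h3
      right; right; right; right; left
      ext i j
      fin_cases i <;> fin_cases j <;> simp [R3mat, P1mat, Matrix.mul_apply, Fin.sum_univ_three] <;>
        ring
    · obtain rfl : q = -(Real.sqrt 3 / 2) := by linarith
      obtain rfl : t = -(1 / 2) := by linarith
      obtain rfl : s = 1 := by linear_combination hdet - s / 4 * h3
      right; right; left
      ext i j
      fin_cases i <;> fin_cases j <;> simp [R3mat, Matrix.mul_apply, Fin.sum_univ_three] <;>
        linarith

end

/-! ### The action on an equilateral triangle -/

/-- The vertices `e₁`, `R₃ e₁`, `R₃² e₁` of an equilateral triangle; these are the nonzero solutions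
of `K(v, v) = λ v`. -/
def tri : Fin 3 → V₃ :=
  ![!₂[1, 0, 0], !₂[-(1/2), Real.sqrt 3/2, 0], !₂[-(1/2), -(Real.sqrt 3/2), 0]]

lemma tri_injective : Function.Injective tri := by
  have h3 : 0 < Real.sqrt 3 := Real.sqrt_pos.mpr (by norm_num)
  intro i j hij
  have h0 := congrArg (fun v : V₃ => v 0) hij
  have h1 := congrArg (fun v : V₃ => v 1) hij
  fin_cases i <;> fin_cases j <;> simp [tri] at h0 h1 ⊢ <;> linarith

lemma P1_tri {g : V₃ ≃ₗᵢ[ℝ] V₃} (hg : matrixOf stdB g = P1mat) (i : Fin 3) :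
    g (tri i) = tri (Equiv.swap 1 2 i) := by
  ext k
  rw [apply_coord, hg]
  fin_cases i <;> fin_cases k <;> simp [tri, P1mat, Equiv.swap_apply_def]

lemma R3_tri {g : V₃ ≃ₗᵢ[ℝ] V₃} (hg : matrixOf stdB g = R3mat) (i : Fin 3) :
    g (tri i) = tri (finRotate 3 i) := by
  have h3 := sqrt_three_mul_self
  ext k
  rw [apply_coord, hg]
  fin_cases i <;> fin_cases k <;> simp [tri, R3mat] <;> linarith

/-- The hypothesis on the matrix excludes the reflection in `e₃⊥`, which also fixes the triangle. -/
lemma eq_one_of_fix_tri {g : V₃ ≃ₗᵢ[ℝ] V₃} (hg : matrixOf stdB g ∈ s3MatSet)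
    (h : ∀ i, g (tri i) = tri i) : g = 1 := by
  have h3 : 0 < Real.sqrt 3 := Real.sqrt_pos.mpr (by norm_num)
  have h3' := sqrt_three_mul_self
  have h0 := congrArg (fun v : V₃ => v 0) (h 0)
  have h1 := congrArg (fun v : V₃ => v 1) (h 1)
  have h2 := congrArg (fun v : V₃ => v 1) (h 2)
  simp only [apply_coord] at h0 h1 h2
  apply matrixOf_injective
  rw [matrixOf_one]
  rcases hg with hg | hg | hg | hg | hg | hg
  · exact hg
  all_goals
    exfalso
    rw [hg] at h0 h1 h2
    simp [tri, R3mat, P1mat, Matrix.mul_apply, Fin.sum_univ_three] at h0 h1 h2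
    nlinarith

lemma perm_fin_three (σ : Equiv.Perm (Fin 3)) :
    σ = 1 ∨ σ = finRotate 3 ∨ σ = finRotate 3 * finRotate 3 ∨ σ = Equiv.swap 1 2 ∨
      σ = Equiv.swap 1 2 * finRotate 3 ∨ σ = finRotate 3 * Equiv.swap 1 2 := by
  revert σ
  decide

/-- The group generated by the isometries `p` and `r` of matrices `P₁` and `R₃` permutes the triangle
`tri`. The action is onto `S₃` because of the images of `p` and `r`, and it is faithful as soon as
the matrices of the group all lie in `s3MatSet`. -/
lemma nonempty_mulEquiv_perm (H : Subgroup (V₃ ≃ₗᵢ[ℝ] V₃)) {p r : V₃ ≃ₗᵢ[ℝ] V₃}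
    (hp : matrixOf stdB p = P1mat) (hr : matrixOf stdB r = R3mat)
    (hH : ∀ g ∈ H, matrixOf stdB g ∈ s3MatSet) (hpH : p ∈ H) (hrH : r ∈ H)
    (hcl : H = Subgroup.closure {p, r}) :
    Nonempty (H ≃* Equiv.Perm (Fin 3)) := by
  have hex : ∀ g : H, ∃ σ : Equiv.Perm (Fin 3), ∀ i, (g : V₃ ≃ₗᵢ[ℝ] V₃) (tri i) = tri (σ i) := by
    intro g
    have hg : (g : V₃ ≃ₗᵢ[ℝ] V₃) ∈ Subgroup.closure {p, r} := hcl ▸ g.2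
    generalize (g : V₃ ≃ₗᵢ[ℝ] V₃) = g at hg
    induction hg using Subgroup.closure_induction with
    | mem x hx =>
      rcases hx with rfl | rfl
      · exact ⟨_, P1_tri hp⟩
      · exact ⟨_, R3_tri hr⟩
    | one => exact ⟨1, fun i => rfl⟩
    | mul x y _ _ hx hy =>
      obtain ⟨σ, hσ⟩ := hx
      obtain ⟨τ, hτ⟩ := hy
      refine ⟨σ * τ, fun i => ?_⟩
      simp [hτ, hσ]
    | inv x _ hx =>
      obtain ⟨σ, hσ⟩ := hx
      refine ⟨σ⁻¹, fun i => ?_⟩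
      apply x.injective
      rw [hσ]
      simp
  choose f hf using hex
  have huniq : ∀ (g : H) (σ : Equiv.Perm (Fin 3)),
      (∀ i, (g : V₃ ≃ₗᵢ[ℝ] V₃) (tri i) = tri (σ i)) → f g = σ := by
    intro g σ hσ
    ext i : 1
    exact tri_injective ((hf g i).symm.trans (hσ i))
  let F : H →* Equiv.Perm (Fin 3) := MonoidHom.mk' f fun g h =>
    huniq _ _ fun i => by simp [hf]
  have hinj : Function.Injective F := by
    rw [injective_iff_map_eq_one]
    intro g hg
    apply Subtype.ext
    refine eq_one_of_fix_tri (hH _ g.2) fun i => ?_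
    have h1 : f g = 1 := hg
    simpa [h1] using hf g i
  have hsurj : Function.Surjective F := by
    have hFp : F ⟨p, hpH⟩ = Equiv.swap 1 2 := huniq _ _ (P1_tri hp)
    have hFr : F ⟨r, hrH⟩ = finRotate 3 := huniq _ _ (R3_tri hr)
    intro σ
    rw [← MonoidHom.mem_range]
    have h1 : Equiv.swap 1 2 ∈ F.range := ⟨_, hFp⟩
    have h2 : finRotate 3 ∈ F.range := ⟨_, hFr⟩
    rcases perm_fin_three σ with rfl | rfl | rfl | rfl | rfl | rfl
    · exact one_mem _
    · exact h2
    · exact mul_mem h2 h2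
    · exact h1
    · exact mul_mem h1 h2
    · exact mul_mem h2 h1
  exact ⟨MulEquiv.ofBijective F ⟨hinj, hsurj⟩⟩

/-- The matrices in `s3MatSet` are words in `P₁` and `R₃`. -/
lemma mem_of_matrixOf_mem (H : Subgroup (V₃ ≃ₗᵢ[ℝ] V₃)) {p r g : V₃ ≃ₗᵢ[ℝ] V₃}
    (hp : matrixOf stdB p = P1mat) (hr : matrixOf stdB r = R3mat) (hpH : p ∈ H) (hrH : r ∈ H)
    (hg : matrixOf stdB g ∈ s3MatSet) : g ∈ H := by
  rcases hg with hg | hg | hg | hg | hg | hg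
  · rw [← matrixOf_one] at hg
    exact matrixOf_injective hg ▸ one_mem H
  · rw [← hr] at hg
    exact matrixOf_injective hg ▸ hrH
  · rw [← hr, ← matrixOf_mul] at hg
    exact matrixOf_injective hg ▸ mul_mem hrH hrH
  · rw [← hp] at hg
    exact matrixOf_injective hg ▸ hpH
  · rw [← hr, ← hp, ← matrixOf_mul] at hg
    exact matrixOf_injective hg ▸ mul_mem hpH hrH
  · rw [Set.mem_singleton_iff, ← hr, ← hp, ← matrixOf_mul] at hg
    exact matrixOf_injective hg ▸ mul_mem hrH hpH

/-- if `(K,S)` is in `S₃`-canonical form with `λ > 0` in the standard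
basis, then the stabilizer of `(K,S)` in `SO(3)` is exactly the order-6 subgroup
`{id, R₃, R₃², P₁, P₁R₃, R₃P₁}` generated by `P₁` and `R₃`, and this group is isomorphic
to the symmetric group `S₃`. -/
theorem statement_10 (K : V₃ →ₗ[ℝ] V₃ →ₗ[ℝ] V₃) (S : V₃ →ₗ[ℝ] V₃)
    (hK : IsAdmissibleK K) (hS : IsSymmEndo S)
    (lam a b : ℝ) (hlam : 0 < lam) (hform : S3Form K S stdB lam a b) :
    stab K S = {g | matrixOf stdB g ∈ s3MatSet} ∧
    ∃ H : Subgroup (V₃ ≃ₗᵢ[ℝ] V₃), (H : Set (V₃ ≃ₗᵢ[ℝ] V₃)) = stab K S ∧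
      H = Subgroup.closure
        {g | matrixOf stdB g ∈ ({P1mat, R3mat} : Set (Matrix (Fin 3) (Fin 3) ℝ))} ∧
      Nat.card H = 6 ∧
      Nonempty (H ≃* Equiv.Perm (Fin 3)) := by
  obtain ⟨p, hp⟩ := exists_P1
  obtain ⟨r, hr⟩ := exists_R3
  have hpH : p ∈ stabSubgroup K S := mem_stab_of_P1 hK hform hp
  have hrH : r ∈ stabSubgroup K S := mem_stab_of_R3 hK hform hr
  have hH : ∀ g, g ∈ stabSubgroup K S ↔ matrixOf stdB g ∈ s3MatSet := fun g =>
    ⟨matrixOf_mem_of_mem_stab hK hlam hform, mem_of_matrixOf_mem _ hp hr hpH hrH⟩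
  have hgen : {g | matrixOf stdB g ∈ ({P1mat, R3mat} : Set (Matrix (Fin 3) (Fin 3) ℝ))} =
      {p, r} := by
    ext g
    simp only [Set.mem_ofPred_eq, Set.mem_insert_iff, Set.mem_singleton_iff, ← hp, ← hr,
      matrixOf_injective.eq_iff]
  have hcl : stabSubgroup K S = Subgroup.closure {p, r} := by
    apply le_antisymm
    · intro g hg
      exact mem_of_matrixOf_mem _ hp hr (Subgroup.subset_closure (by simp))
        (Subgroup.subset_closure (by simp)) ((hH g).mp hg)
    · rw [Subgroup.closure_le]
      rintro g (rfl | rfl)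
      · exact hpH
      · exact hrH
  have hiso := nonempty_mulEquiv_perm _ hp hr (fun g => (hH g).mp) hpH hrH hcl
  refine ⟨Set.ext hH, stabSubgroup K S, rfl, hgen ▸ hcl, ?_, hiso⟩
  rw [Nat.card_congr hiso.some.toEquiv, Nat.card_perm, Nat.card_fin]
  rfl
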